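/- Let U ∈ ℝ^{k×d} have orthonormal rows, let a ∈ ℝ^d be a unit vector lying in the row span of U, let v ∈ ℝ^d be a unit vector, and let δ ∈ (0,1) be such that |⟨Ua, Uv⟩ − ⟨a, v⟩| ≤ δ and ‖Uv‖₂² ≥ 1 − δ². Let Π := I_d − vvᵀ be the orthogonal projection onto the complement of v. Then ‖UΠa‖₂² ≥ ‖Πa‖₂² − δ² − 2δ. -/

import Mathlib

open MeasureTheory

/-- The Euclidean norm on `ℝ^n`. -/
noncomputable def e2norm {n : ℕ} (v : Fin n → ℝ) : ℝ := Real.sqrt (∑ i, v i ^ 2)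

open Matrix in
lemma e2norm_sq {n : ℕ} (v : Fin n → ℝ) : e2norm v ^ 2 = v ⬝ᵥ v := by
  unfold e2norm
  rw [Real.sq_sqrt (Finset.sum_nonneg fun i _ => sq_nonneg _)]
  simp [dotProduct, sq]

open Matrix in
lemma dot_expand {n : ℕ} (x y : Fin n → ℝ) (c : ℝ) :
    (x - c • y) ⬝ᵥ (x - c • y) = x ⬝ᵥ x - 2 * c * (x ⬝ᵥ y) + c ^ 2 * (y ⬝ᵥ y) := by
  simp only [sub_dotProduct, dotProduct_sub, smul_dotProduct, dotProduct_smul, smul_eq_mul,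
    dotProduct_comm y x]
  ring

/-- If `U` has orthonormal rows, `a` is a unit vector in the row span of `U`, `v` is a
unit vector, `|⟨Ua, Uv⟩ − ⟨a,v⟩| ≤ δ`, and `‖Uv‖² ≥ 1 − δ²`, then with
`Π = I − vvᵀ` we have `‖UΠa‖² ≥ ‖Πa‖² − δ² − 2δ`. -/
theorem stmt10 (k d : ℕ) (U : Matrix (Fin k) (Fin d) ℝ) (hU : U * U.transpose = 1)
    (a v : Fin d → ℝ) (ha : e2norm a = 1) (hv : e2norm v = 1)
    (haspan : a ∈ Set.range U.transpose.mulVec)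
    (δ : ℝ) (hδ0 : 0 < δ) (hδ1 : δ < 1)
    (hinner : |(∑ j, U.mulVec a j * U.mulVec v j) - ∑ i, a i * v i| ≤ δ)
    (hUv : 1 - δ ^ 2 ≤ e2norm (U.mulVec v) ^ 2) :
    e2norm (a - (∑ i, v i * a i) • v) ^ 2 - δ ^ 2 - 2 * δ ≤
      e2norm (U.mulVec (a - (∑ i, v i * a i) • v)) ^ 2 := by
  have ha2 := e2norm_sq a
  have hv2 := e2norm_sq v
  rw [ha] at ha2
  rw [hv] at hv2
  obtain ⟨w, rfl⟩ := haspan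
  have hc : (∑ i, v i * U.transpose.mulVec w i) = dotProduct (U.transpose.mulVec w) v := by
    rw [dotProduct_comm]; rfl
  have hUa : U.mulVec (U.transpose.mulVec w) = w := by
    rw [Matrix.mulVec_mulVec, hU, Matrix.one_mulVec]
  have hdot : ∀ y : Fin d → ℝ,
      dotProduct (U.transpose.mulVec w) y = dotProduct w (U.mulVec y) := by
    intro y
    rw [Matrix.mulVec_transpose, Matrix.dotProduct_mulVec]
  have hww := hdot (U.transpose.mulVec w)
  rw [hUa] at hww
  have hwv := hdot v
  rw [hc]
  have h0 := sq_nonneg (e2norm (U.transpose.mulVec w -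
    (dotProduct (U.transpose.mulVec w) v) • v))
  rw [e2norm_sq] at hUv
  rw [e2norm_sq, dot_expand] at h0
  rw [e2norm_sq, e2norm_sq, Matrix.mulVec_sub, Matrix.mulVec_smul, hUa, dot_expand, dot_expand,
    ← hwv, ← hww]
  rw [← ha2, ← hv2] at *
  generalize dotProduct (U.transpose.mulVec w) v = c at *
  have h1 : c ^ 2 ≤ 1 := by nlinarith
  have h2 := mul_le_mul_of_nonneg_left hUv (sq_nonneg c)
  have h3 := mul_le_mul_of_nonneg_right h1 (sq_nonneg δ)
  nlinarith
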